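/- Product rule for paired probabilistic programs: let t and s be closed typed terms of the calculus λ^test_trust. If Pr(u, 𝒯_t) = p and Pr(v, 𝒯_s) = q, then Pr(⟨u, v⟩, 𝒯_{⟨t, s⟩}) = p·q; i.e., the probability that the pair term ⟨t, s⟩ yields the output ⟨u, v⟩ equals the product of the probability that t yields u and the probability that s yields v. -/

import Mathlib

open scoped Classical

/-- Types of the calculus λ^test_trust. -/
inductive Ty : Type where
  | atom : ℕ → Ty
  | arrow : Ty → Ty → Ty
  | sum : List Ty → Ty
  | tuple : Ty → ℕ → Ty
  | bool : List (ℚ × Ty) → ℚ → Ty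

/-- Subtyping relation extending a relation `S` on atomic types.
    The convention identifying a one-summand sum with its summand is included. -/
inductive SubTy (S : ℕ → ℕ → Prop) : Ty → Ty → Prop where
  | refl (A) : SubTy S A A
  | trans {A B C} : SubTy S A B → SubTy S B C → SubTy S A C
  | atom {a b} : S a b → SubTy S (.atom a) (.atom b)
  | arrow {A1 A2 B1 B2} : SubTy S B1 A1 → SubTy S A2 B2 →
      SubTy S (.arrow A1 A2) (.arrow B1 B2)
  | sum {As Bs : List Ty} (g : Fin As.length → Ty) :
      (∀ i, g i ∈ Bs) → (∀ i, SubTy S (As.get i) (g i)) →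
      SubTy S (.sum As) (.sum Bs)
  | tuple {A B m n} : SubTy S A B → n ≤ m → SubTy S (.tuple A m) (.tuple B n)
  | sumSingle (A) : SubTy S (.sum [A]) A
  | singleSum (A) : SubTy S A (.sum [A])

/-- Terms of the calculus λ^test_trust. -/
inductive Tm : Type where
  | tt : Tm
  | ff : Tm
  | var : ℕ → Tm
  | lam : ℕ → Ty → Tm → Tm
  | app : Tm → Tm → Tm
  | choice : List ℚ → List Tm → Tm
  | exp : ℕ → Tm → Tm
  | tup : List Tm → Tm
  | proj : Tm → ℕ → Tm
  | trust : Tm → List (ℚ × Ty) → ℚ → Tm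

mutual
/-- Substitution `t[s/x]`. -/
def subst (x : ℕ) (s : Tm) : Tm → Tm
  | .tt => .tt
  | .ff => .ff
  | .var y => if y = x then s else .var y
  | .lam y A t => if y = x then .lam y A t else .lam y A (subst x s t)
  | .app t u => .app (subst x s t) (subst x s u)
  | .choice qs ts => .choice qs (substList x s ts)
  | .exp n t => .exp n (subst x s t)
  | .tup ts => .tup (substList x s ts)
  | .proj t j => .proj (subst x s t) j
  | .trust t P e => .trust (subst x s t) P e

def substList (x : ℕ) (s : Tm) : List Tm → List Tm
  | [] => []
  | t :: ts => subst x s t :: substList x s ts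
end

/-- Typing judgement of λ^test_trust, relative to an atomic subtyping relation `S`
    and an assignment `env` of types to variables. -/
inductive HasTy (S : ℕ → ℕ → Prop) : (ℕ → Ty) → Tm → Ty → Prop where
  | tt {env P e} : HasTy S env .tt (.bool P e)
  | ff {env P e} : HasTy S env .ff (.bool P e)
  | var {env x} : HasTy S env (.var x) (env x)
  | lam {env x A t B} : HasTy S (Function.update env x A) t B →
      HasTy S env (.lam x A t) (.arrow A B)
  | app {env f u A B C} : HasTy S env f (.arrow A B) → HasTy S env u C →
      SubTy S C A → HasTy S env (.app f u) B
  | appChoice {env f u C} {As : List (Ty × Ty)} :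
      HasTy S env f (.sum (As.map (fun p => Ty.arrow p.1 p.2))) →
      HasTy S env u C → (∀ p ∈ As, SubTy S C p.1) → As ≠ [] →
      HasTy S env (.app f u) (.sum (As.map Prod.snd))
  | choice {env qs ts} {As : List Ty} : qs.length = ts.length → ts ≠ [] → qs.sum = 1 →
      ts.length = As.length →
      (∀ i (h1 : i < ts.length) (h2 : i < As.length),
        HasTy S env (ts.get ⟨i, h1⟩) (As.get ⟨i, h2⟩)) →
      (∃ A, ∀ B ∈ As, SubTy S B A) →
      HasTy S env (.choice qs ts) (.sum As)
  | exp {env n t A} : 1 ≤ n → HasTy S env t A →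
      HasTy S env (.exp n t) (.tuple A n)
  | tup {env ts E} {Es : List Ty} : ts ≠ [] → ts.length = Es.length →
      (∀ i (h1 : i < ts.length) (h2 : i < Es.length),
        HasTy S env (ts.get ⟨i, h1⟩) (Es.get ⟨i, h2⟩)) →
      (∀ E' ∈ Es, SubTy S E' E) → HasTy S env (.tup ts) (.tuple E ts.length)
  | proj {env t A n j} : HasTy S env t (.tuple A n) → 1 ≤ j → j ≤ n →
      HasTy S env (.proj t j) A
  | trust {env t A n P e} : HasTy S env t (.tuple A n) →
      HasTy S env (.trust t P e) (.bool P e)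

/-- Values of λ^test_trust. -/
inductive IsValue : Tm → Prop where
  | tt : IsValue .tt
  | ff : IsValue .ff
  | lam {x A t} : IsValue (.lam x A t)
  | tup {ts} : (∀ u ∈ ts, IsValue u) → IsValue (.tup ts)

/-- `ClosedU V t`: all free variables of `t` are in `V`. -/
inductive ClosedU : List ℕ → Tm → Prop where
  | tt {V} : ClosedU V .tt
  | ff {V} : ClosedU V .ff
  | var {V x} : x ∈ V → ClosedU V (.var x)
  | lam {V x A t} : ClosedU (x :: V) t → ClosedU V (.lam x A t)
  | app {V t u} : ClosedU V t → ClosedU V u → ClosedU V (.app t u)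
  | choice {V qs ts} : (∀ t ∈ ts, ClosedU V t) → ClosedU V (.choice qs ts)
  | exp {V n t} : ClosedU V t → ClosedU V (.exp n t)
  | tup {V ts} : (∀ t ∈ ts, ClosedU V t) → ClosedU V (.tup ts)
  | proj {V t j} : ClosedU V t → ClosedU V (.proj t j)
  | trust {V t P e} : ClosedU V t → ClosedU V (.trust t P e)

/-- `t` is a closed term. -/
def Closed (t : Tm) : Prop := ClosedU [] t

/-- The frequency distribution encoded by the list of types `Ss` is within
    total-variation distance `ε` of the probability distribution `P` over types. -/
def FreqClose (S : ℕ → ℕ → Prop) (Ss : List Ty) (P : List (ℚ × Ty)) (ε : ℚ) : Prop :=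
  (∀ qB ∈ P,
      |((Ss.countP (fun T => decide (SubTy S T qB.2)) : ℚ) / (Ss.length : ℚ)) - qB.1| ≤ ε) ∧
  (∀ T ∈ Ss, ∃ qB ∈ P, SubTy S T qB.2)

/-- The tuple of values `ss` passes the trustworthiness check against `P` with threshold `ε`. -/
def TrustCond (S : ℕ → ℕ → Prop) (env : ℕ → Ty) (ss : List Tm)
    (P : List (ℚ × Ty)) (ε : ℚ) : Prop :=
  ∃ Ss : List Ty, List.Forall₂ (HasTy S env) ss Ss ∧ FreqClose S Ss P ε

/-- Base reduction rules `t ↦ᵢ_p t'` of λ^test_trust; the natural number `i`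
    records which rule instance is used (the index of the chosen branch for a
    probabilistic choice, `0` otherwise), and `p` is the probability label. -/
inductive Step (S : ℕ → ℕ → Prop) (env : ℕ → Ty) : Tm → ℕ → ℚ → Tm → Prop where
  | beta {x A t u} : Step S env (.app (.lam x A t) u) 0 1 (subst x u t)
  | choice {qs ts} {i : ℕ} (h1 : i < qs.length) (h2 : i < ts.length) :
      Step S env (.choice qs ts) i (qs.get ⟨i, h1⟩) (ts.get ⟨i, h2⟩)
  | exp {n t} : Step S env (.exp n t) 0 1 (.tup (List.replicate n t))
  | proj {ts : List Tm} {j : ℕ} (hj : 1 ≤ j) (h : j - 1 < ts.length) :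
      Step S env (.proj (.tup ts) j) 0 1 (ts.get ⟨j - 1, h⟩)
  | trustT {ts P e} : (∀ u ∈ ts, IsValue u) → TrustCond S env ts P e →
      Step S env (.trust (.tup ts) P e) 0 1 .tt
  | trustF {ts P e} : (∀ u ∈ ts, IsValue u) → ¬ TrustCond S env ts P e →
      Step S env (.trust (.tup ts) P e) 0 1 .ff

/-- The call-by-name reduction strategy of λ^test_trust. -/
inductive CBN (S : ℕ → ℕ → Prop) (env : ℕ → Ty) : Tm → ℕ → ℚ → Tm → Prop where
  | base {t i p t'} : Step S env t i p t' → CBN S env t i p t'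
  | appL {t i p t' u} : CBN S env t i p t' → CBN S env (.app t u) i p (.app t' u)
  | tup {pre post : List Tm} {t i p t'} : (∀ u ∈ pre, IsValue u) → ¬ IsValue t →
      CBN S env t i p t' →
      CBN S env (.tup (pre ++ t :: post)) i p (.tup (pre ++ t' :: post))
  | trust {t i p t' P e} : CBN S env t i p t' →
      CBN S env (.trust t P e) i p (.trust t' P e)
  | proj {t i p t' j} : (∀ ts, t ≠ .tup ts) → CBN S env t i p t' →
      CBN S env (.proj t j) i p (.proj t' j)

/-- Redexes of λ^test_trust. -/
inductive IsRedex : Tm → Prop where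
  | beta {x A t u} : IsRedex (.app (.lam x A t) u)
  | choice {qs ts} : IsRedex (.choice qs ts)
  | exp {n t} : IsRedex (.exp n t)
  | proj {ts : List Tm} {j : ℕ} : 1 ≤ j → j ≤ ts.length → IsRedex (.proj (.tup ts) j)
  | trust {ts P e} : (∀ u ∈ ts, IsValue u) → IsRedex (.trust (.tup ts) P e)

/-- `t` contains a redex (as a subterm). -/
inductive HasRedex : Tm → Prop where
  | here {t} : IsRedex t → HasRedex t
  | lam {x A t} : HasRedex t → HasRedex (.lam x A t)
  | appL {t u} : HasRedex t → HasRedex (.app t u)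
  | appR {t u} : HasRedex u → HasRedex (.app t u)
  | choice {qs ts t} : t ∈ ts → HasRedex t → HasRedex (.choice qs ts)
  | exp {n t} : HasRedex t → HasRedex (.exp n t)
  | tup {ts t} : t ∈ ts → HasRedex t → HasRedex (.tup ts)
  | proj {t j} : HasRedex t → HasRedex (.proj t j)
  | trust {t P e} : HasRedex t → HasRedex (.trust t P e)

/-- Full (unrestricted) one-step reduction: a base reduction applied in an
    arbitrary position. -/
inductive Full (S : ℕ → ℕ → Prop) (env : ℕ → Ty) : Tm → Tm → Prop where
  | base {t t' i p} : Step S env t i p t' → Full S env t t'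
  | lam {x A t t'} : Full S env t t' → Full S env (.lam x A t) (.lam x A t')
  | appL {t t' u} : Full S env t t' → Full S env (.app t u) (.app t' u)
  | appR {t u u'} : Full S env u u' → Full S env (.app t u) (.app t u')
  | choice {qs pre post t t'} : Full S env t t' →
      Full S env (.choice qs (pre ++ t :: post)) (.choice qs (pre ++ t' :: post))
  | exp {n t t'} : Full S env t t' → Full S env (.exp n t) (.exp n t')
  | tup {pre post t t'} : Full S env t t' →
      Full S env (.tup (pre ++ t :: post)) (.tup (pre ++ t' :: post))
  | proj {t t' j} : Full S env t t' → Full S env (.proj t j) (.proj t' j)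
  | trust {t t' P e} : Full S env t t' → Full S env (.trust t P e) (.trust t' P e)
/-- Maximal CBN reduction paths: `PathTo S env t l o` holds when `l` records a
    complete branch of the reduction tree of `t` (each entry giving the rule
    instance, its probability label and the resulting term) ending at the
    leaf `o`. -/
inductive PathTo (S : ℕ → ℕ → Prop) (env : ℕ → Ty) :
    Tm → List (ℕ × ℚ × Tm) → Tm → Prop where
  | nil {t} : (∀ i p t', ¬ CBN S env t i p t') → PathTo S env t [] t
  | cons {t i p t' l o} : CBN S env t i p t' → PathTo S env t' l o →
      PathTo S env t ((i, p, t') :: l) o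

/-- The product of the probability labels along a path. -/
def pathWeight (l : List (ℕ × ℚ × Tm)) : ℝ :=
  (l.map (fun e => ((e.2.1 : ℚ) : ℝ))).prod

/-- `PrOut S env t o` is the output probability `Pr(o, 𝒯_t)`: the sum, over all
    leaves of the reduction tree `𝒯_t` at which the term `o` occurs, of the
    products of the labels along the corresponding root-to-leaf paths. -/
noncomputable def PrOut (S : ℕ → ℕ → Prop) (env : ℕ → Ty) (t o : Tm) : ℝ :=
  ∑' l : {l : List (ℕ × ℚ × Tm) // PathTo S env t l o}, pathWeight l.1

/-- `lamsAux k [A₀, …, A_{m-1}] b = λx_k^{A₀}. … λx_{k+m-1}^{A_{m-1}}. b`. -/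
def lamsAux : ℕ → List Ty → Tm → Tm
  | _, [], b => b
  | k, A :: As, b => .lam k A (lamsAux (k + 1) As b)

/-- The body `{p₁⟨t₁,x₁⟩, …, pₙ⟨tₙ,xₙ⟩}` of a conditional construct. -/
def condBody (qs : List ℚ) (ts : List Tm) : Tm :=
  .choice qs (List.zipWith (fun t k => Tm.tup [t, .var k]) ts (List.range ts.length))

/-- The conditional construct `(s₁, …, sₙ ∣ {p₁t₁, …, pₙtₙ})`, i.e. the term
    `(λx₁^{A₁}. … λxₙ^{Aₙ}. {p₁⟨t₁,x₁⟩, …, pₙ⟨tₙ,xₙ⟩}) s₁ … sₙ`. -/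
def condConstruct (qs : List ℚ) (ts ss : List Tm) (As : List Ty) : Tm :=
  ss.foldl Tm.app (lamsAux 0 As (condBody qs ts))

/-!
Call-by-name reduces `⟨t, s⟩` inside `t` until `t` has become a value and only then inside `s`, so
a branch from `⟨t, s⟩` to `⟨u, v⟩` is a branch from `t` to the value `u` followed by a branch from
`s` to `v`, and the weights multiply. If instead `t` could get stuck at a term other than a value,
`s` would never be reduced; that this does not happen, and that the reduction trees of `t` and `s`
are finite, is type safety. Subject reduction fails: as there is no subsumption rule, substituting
a choice with a single tuple as its only branch for `x` makes a projection of `x` untypable. A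
reducibility argument takes its place: a closed term of type `A` is shown to evaluate to a weak head
normal form in an interpretation of `A` on which subtyping acts by inclusion.
-/

section Substitution

variable {V W : List ℕ} {x : ℕ} {s t : Tm} {γ : List (ℕ × Tm)}

theorem substList_eq_map (x : ℕ) (s : Tm) (ts : List Tm) :
    substList x s ts = ts.map (subst x s) := by
  induction ts with
  | nil => simp [substList]
  | cons t ts ih => simp [substList, ih]

theorem subst_eq_self (ht : ClosedU V t) (hx : x ∉ V) : subst x s t = t := by
  induction ht with
  | tt | ff => simp only [subst]
  | var hy => simp only [subst, if_neg (ne_of_mem_of_not_mem hy hx)]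
  | @lam V y A t _ ih =>
    by_cases hyx : y = x
    · simp only [subst, if_pos hyx]
    · simp only [subst, if_neg hyx, ih (List.not_mem_cons_of_ne_of_not_mem (Ne.symm hyx) hx)]
  | app _ _ iht ihu => simp only [subst, iht hx, ihu hx]
  | choice _ ih | tup _ ih =>
    simp only [subst, substList_eq_map, List.map_congr_left fun t ht => ih t ht hx, List.map_id']
  | exp _ ih | proj _ ih | trust _ ih => simp only [subst, ih hx]

theorem ClosedU.mono (ht : ClosedU V t) (hVW : V ⊆ W) : ClosedU W t := by
  induction ht generalizing W with
  | tt => exact .tt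
  | ff => exact .ff
  | var hx => exact .var (hVW hx)
  | lam _ ih => exact .lam (ih (List.cons_subset_cons _ hVW))
  | app _ _ iht ihu => exact .app (iht hVW) (ihu hVW)
  | choice _ ih => exact .choice fun t ht => ih t ht hVW
  | exp _ ih => exact .exp (ih hVW)
  | tup _ ih => exact .tup fun t ht => ih t ht hVW
  | proj _ ih => exact .proj (ih hVW)
  | trust _ ih => exact .trust (ih hVW)

theorem ClosedU.subst (ht : ClosedU W t) (hW : W ⊆ x :: V) (hs : Closed s) :
    ClosedU V (subst x s t) := by
  induction ht generalizing V with
  | tt => simpa only [_root_.subst] using .tt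
  | ff => simpa only [_root_.subst] using .ff
  | @var W y hy =>
    by_cases hyx : y = x
    · simpa only [_root_.subst, if_pos hyx] using ClosedU.mono hs (List.nil_subset V)
    · simpa only [_root_.subst, if_neg hyx] using
        ClosedU.var (List.mem_of_ne_of_mem hyx (hW hy))
  | @lam W y A t ht ih =>
    by_cases hyx : y = x
    · subst hyx
      simpa only [_root_.subst, if_true] using
        ClosedU.lam (ht.mono (List.cons_subset.2 ⟨List.mem_cons_self, hW⟩))
    · simp only [_root_.subst, if_neg hyx]
      exact .lam (ih (by grind))
  | app _ _ iht ihu => simpa only [_root_.subst] using .app (iht hW) (ihu hW)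
  | choice _ ih =>
    simp only [_root_.subst, substList_eq_map]
    exact .choice (List.forall_mem_map.2 fun t ht => ih t ht hW)
  | exp _ ih => simpa only [_root_.subst] using .exp (ih hW)
  | tup _ ih =>
    simp only [_root_.subst, substList_eq_map]
    exact .tup (List.forall_mem_map.2 fun t ht => ih t ht hW)
  | proj _ ih => simpa only [_root_.subst] using .proj (ih hW)
  | trust _ ih => simpa only [_root_.subst] using .trust (ih hW)

/-- The iterated substitution `t[u₁/x₁]…[uₙ/xₙ]` along `[(x₁, u₁), …, (xₙ, uₙ)]`. As only closed
terms are substituted, it has the effect of a parallel substitution in which, for a repeated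
variable, the first binding wins. -/
def substAll : List (ℕ × Tm) → Tm → Tm
  | [], t => t
  | (x, u) :: γ, t => substAll γ (subst x u t)

theorem substAll_append_singleton (γ : List (ℕ × Tm)) (x : ℕ) (u t : Tm) :
    substAll (γ ++ [(x, u)]) t = subst x u (substAll γ t) := by
  induction γ generalizing t with
  | nil => simp only [List.nil_append, substAll]
  | cons _ _ ih => simp only [List.cons_append, substAll, ih]

theorem substAll_tt (γ : List (ℕ × Tm)) : substAll γ .tt = .tt := by
  induction γ with
  | nil => rfl
  | cons _ _ ih => simp only [substAll, subst, ih]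

theorem substAll_ff (γ : List (ℕ × Tm)) : substAll γ .ff = .ff := by
  induction γ with
  | nil => rfl
  | cons _ _ ih => simp only [substAll, subst, ih]

theorem substAll_lam (γ : List (ℕ × Tm)) (x : ℕ) (A : Ty) (t : Tm) :
    substAll γ (.lam x A t) = .lam x A (substAll (γ.filter (·.1 ≠ x)) t) := by
  induction γ generalizing t with
  | nil => rfl
  | cons b γ ih =>
    by_cases hbx : b.1 = x
    · simp [substAll, subst, hbx, ih]
    · simp [substAll, subst, hbx, Ne.symm hbx, ih]

theorem substAll_app (γ : List (ℕ × Tm)) (t u : Tm) :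
    substAll γ (.app t u) = .app (substAll γ t) (substAll γ u) := by
  induction γ generalizing t u with
  | nil => rfl
  | cons _ _ ih => simp only [substAll, subst, ih]

theorem substAll_choice (γ : List (ℕ × Tm)) (qs : List ℚ) (ts : List Tm) :
    substAll γ (.choice qs ts) = .choice qs (ts.map (substAll γ)) := by
  induction γ generalizing ts with
  | nil => simp [substAll]
  | cons _ _ ih => simp [substAll, subst, substList_eq_map, ih]

theorem substAll_exp (γ : List (ℕ × Tm)) (n : ℕ) (t : Tm) :
    substAll γ (.exp n t) = .exp n (substAll γ t) := by
  induction γ generalizing t with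
  | nil => rfl
  | cons _ _ ih => simp only [substAll, subst, ih]

theorem substAll_tup (γ : List (ℕ × Tm)) (ts : List Tm) :
    substAll γ (.tup ts) = .tup (ts.map (substAll γ)) := by
  induction γ generalizing ts with
  | nil => simp [substAll]
  | cons _ _ ih => simp [substAll, subst, substList_eq_map, ih]

theorem substAll_proj (γ : List (ℕ × Tm)) (t : Tm) (j : ℕ) :
    substAll γ (.proj t j) = .proj (substAll γ t) j := by
  induction γ generalizing t with
  | nil => rfl
  | cons _ _ ih => simp only [substAll, subst, ih]

theorem substAll_trust (γ : List (ℕ × Tm)) (t : Tm) (P : List (ℚ × Ty)) (e : ℚ) :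
    substAll γ (.trust t P e) = .trust (substAll γ t) P e := by
  induction γ generalizing t with
  | nil => rfl
  | cons _ _ ih => simp only [substAll, subst, ih]

theorem substAll_eq_self (ht : Closed t) (γ : List (ℕ × Tm)) : substAll γ t = t := by
  induction γ with
  | nil => rfl
  | cons _ _ ih => rw [substAll, subst_eq_self ht List.not_mem_nil, ih]

theorem mk_substAll_var_mem (hγ : ∀ b ∈ γ, Closed b.2) (hx : x ∈ γ.map Prod.fst) :
    (x, substAll γ (.var x)) ∈ γ := by
  induction γ with
  | nil => simp at hx
  | cons b γ ih =>
    obtain ⟨hb, hγ⟩ := List.forall_mem_cons.1 hγ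
    by_cases hxb : x = b.1
    · subst hxb
      simp [substAll, subst, substAll_eq_self hb]
    · have hxγ := List.mem_of_ne_of_mem hxb hx
      simpa only [substAll, subst, if_neg hxb] using List.mem_cons_of_mem b (ih hγ hxγ)

theorem closed_substAll (ht : ClosedU (γ.map Prod.fst) t) (hγ : ∀ b ∈ γ, Closed b.2) :
    Closed (substAll γ t) := by
  induction γ generalizing t with
  | nil => exact ht
  | cons b γ ih =>
    obtain ⟨hb, hγ⟩ := List.forall_mem_cons.1 hγ
    exact ih (ht.subst (List.Subset.refl _) hb) hγ

end Substitution

section Reduction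

variable {S : ℕ → ℕ → Prop} {env : ℕ → Ty} {t t' : Tm} {i : ℕ} {p : ℚ}

theorem CBN.not_isValue (h : CBN S env t i p t') : ¬ IsValue t := by
  intro hv
  cases h with
  | base h => cases h <;> cases hv
  | appL | trust | proj => cases hv
  | tup _ ht _ => cases hv with | tup hts => exact ht (hts _ (by simp))

theorem append_cons_inj_of_forall_of_not {α : Type*} {P : α → Prop} {a b : α}
    {l l' m m' : List α} (h : l ++ a :: m = l' ++ b :: m') (hl : ∀ c ∈ l, P c)
    (hl' : ∀ c ∈ l', P c) (ha : ¬ P a) (hb : ¬ P b) : l = l' ∧ a = b ∧ m = m' := by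
  induction l generalizing l' with
  | nil => cases l' <;> grind
  | cons c l ih => cases l' <;> grind

/-- At `t`, the context `K` is an evaluation context: the reductions of `K t` are exactly those of
`t`, performed in place. -/
def ReducesInside (S : ℕ → ℕ → Prop) (env : ℕ → Ty) (K : Tm → Tm) (t : Tm) : Prop :=
  ∀ i p w, CBN S env (K t) i p w ↔ ∃ t', CBN S env t i p t' ∧ w = K t'

theorem ReducesInside.normal {K : Tm → Tm} (hK : ReducesInside S env K t)
    (ht : ∀ i p t', ¬ CBN S env t i p t') (i : ℕ) (p : ℚ) (w : Tm) : ¬ CBN S env (K t) i p w :=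
  fun h => let ⟨t', h, _⟩ := (hK i p w).1 h; ht i p t' h

theorem reducesInside_app (ht : ¬ IsValue t) (u : Tm) :
    ReducesInside S env (fun t => .app t u) t := by
  refine fun i p w => ⟨fun h => ?_, ?_⟩
  · cases h with
    | base h => cases h; exact absurd .lam ht
    | appL h => exact ⟨_, h, rfl⟩
  · rintro ⟨t', h, rfl⟩
    exact .appL h

theorem reducesInside_trust (ht : ¬ IsValue t) (P : List (ℚ × Ty)) (e : ℚ) :
    ReducesInside S env (fun t => .trust t P e) t := by
  refine fun i p w => ⟨fun h => ?_, ?_⟩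
  · cases h with
    | base h => cases h <;> exact absurd (.tup ‹_›) ht
    | trust h => exact ⟨_, h, rfl⟩
  · rintro ⟨t', h, rfl⟩
    exact .trust h

/-- `t` is not syntactically a tuple. -/
def NotTuple (t : Tm) : Prop := ∀ ts, t ≠ .tup ts

theorem reducesInside_proj (ht : NotTuple t) (j : ℕ) :
    ReducesInside S env (fun t => .proj t j) t := by
  refine fun i p w => ⟨fun h => ?_, ?_⟩
  · cases h with
    | base h => cases h; exact absurd rfl (ht _)
    | proj _ h => exact ⟨_, h, rfl⟩
  · rintro ⟨t', h, rfl⟩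
    exact .proj ht h

theorem reducesInside_tup {pre : List Tm} (hpre : ∀ u ∈ pre, IsValue u) (ht : ¬ IsValue t)
    (post : List Tm) : ReducesInside S env (fun t => .tup (pre ++ t :: post)) t := by
  refine fun i p w => ⟨fun (h : CBN S env (.tup (pre ++ t :: post)) i p w) => ?_, ?_⟩
  · generalize hts : pre ++ t :: post = ts at h
    cases h with
    | base h => cases h
    | tup hpre' ht' h =>
      obtain ⟨rfl, rfl, rfl⟩ := append_cons_inj_of_forall_of_not hts hpre hpre' ht ht'
      exact ⟨_, h, rfl⟩
  · rintro ⟨t', h, rfl⟩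
    exact .tup hpre ht h

theorem finite_setOf_step (t : Tm) :
    {e : ℕ × ℚ × Tm | Step S env t e.1 e.2.1 e.2.2}.Finite := by
  cases t with
  | choice qs ts =>
    refine (Set.finite_range fun z : Fin qs.length × Fin ts.length =>
      (z.1.1, qs.get z.1, ts.get z.2)).subset ?_
    rintro ⟨i, p, t'⟩ (h : Step S env _ i p t')
    cases h with
    | choice h₁ h₂ => exact ⟨(⟨i, h₁⟩, ⟨i, h₂⟩), rfl⟩
  | _ =>
    refine Set.Subsingleton.finite ?_
    rintro ⟨i, p, t'⟩ (h : Step S env _ i p t') ⟨j, q, t''⟩ (h' : Step S env _ j q t'')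
    cases h <;> cases h' <;> first | rfl | contradiction

theorem finite_setOf_cbn_of_inside {ι : Type*} [Finite ι] {r : Tm} (K : ι → Tm → Tm)
    (t : ι → Tm) (ht : ∀ k, {e : ℕ × ℚ × Tm | CBN S env (t k) e.1 e.2.1 e.2.2}.Finite)
    (hr : ∀ i p w, CBN S env r i p w →
      Step S env r i p w ∨ ∃ k t', CBN S env (t k) i p t' ∧ w = K k t') :
    {e : ℕ × ℚ × Tm | CBN S env r e.1 e.2.1 e.2.2}.Finite := by
  refine ((finite_setOf_step (S := S) (env := env) r).union (Set.finite_iUnion fun k =>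
    (ht k).image fun e => (e.1, e.2.1, K k e.2.2))).subset ?_
  rintro ⟨i, p, w⟩ hw
  rcases hr i p w hw with h | ⟨k, t', h, rfl⟩
  exacts [.inl h, .inr (Set.mem_iUnion.2 ⟨k, (i, p, t'), h, rfl⟩)]

theorem finite_setOf_cbn (t : Tm) :
    {e : ℕ × ℚ × Tm | CBN S env t e.1 e.2.1 e.2.2}.Finite := by
  match t with
  | .tt | .ff | .var _ | .lam .. | .choice .. | .exp .. =>
    refine finite_setOf_cbn_of_inside (ι := Empty) nofun nofun nofun fun i p w h => ?_
    cases h with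
    | base h => exact .inl h
  | .app f u =>
    refine finite_setOf_cbn_of_inside (fun _ : Unit => (.app · u)) (fun _ => f)
      (fun _ => finite_setOf_cbn f) fun i p w h => ?_
    cases h with
    | base h => exact .inl h
    | appL h => exact .inr ⟨(), _, h, rfl⟩
  | .proj t j =>
    refine finite_setOf_cbn_of_inside (fun _ : Unit => (.proj · j)) (fun _ => t)
      (fun _ => finite_setOf_cbn t) fun i p w h => ?_
    cases h with
    | base h => exact .inl h
    | proj _ h => exact .inr ⟨(), _, h, rfl⟩
  | .trust t P e =>
    refine finite_setOf_cbn_of_inside (fun _ : Unit => (.trust · P e)) (fun _ => t)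
      (fun _ => finite_setOf_cbn t) fun i p w h => ?_
    cases h with
    | base h => exact .inl h
    | trust h => exact .inr ⟨(), _, h, rfl⟩
  | .tup ts =>
    refine finite_setOf_cbn_of_inside (fun (k : Fin ts.length) t => .tup (ts.set k t)) ts.get
      (fun k => have := List.sizeOf_lt_of_mem (ts.getElem_mem k.2); finite_setOf_cbn (ts.get k))
      fun i p w h => ?_
    cases h with
    | base h => exact .inl h
    | @tup pre post t i p t' _ _ h =>
      exact .inr ⟨⟨pre.length, by simp⟩, t', by simpa using h, by simp⟩

end Reduction

section AllUntil

variable {S : ℕ → ℕ → Prop} {env : ℕ → Ty} {P P' Q Q' : Tm → Prop} {t : Tm}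

/-- The operator `A[Q U P]` of computation tree logic on the reduction tree of `t`: every branch
reaches a term satisfying `P`, and all terms before it satisfy `Q`. Being inductive, it bounds the
length of the branches up to `P`. -/
inductive AllUntil (S : ℕ → ℕ → Prop) (env : ℕ → Ty) (Q P : Tm → Prop) : Tm → Prop where
  | now {t : Tm} : P t → AllUntil S env Q P t
  | next {t : Tm} : Q t → (∃ i p t', CBN S env t i p t') →
      (∀ i p t', CBN S env t i p t' → AllUntil S env Q P t') → AllUntil S env Q P t

theorem AllUntil.fill {K : Tm → Tm} (h : AllUntil S env Q P t)
    (hQ : ∀ t, Q t → Q' (K t)) (hK : ∀ t, Q t → ¬ IsValue t → ReducesInside S env K t)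
    (hP : ∀ t, P t → AllUntil S env Q' P' (K t)) : AllUntil S env Q' P' (K t) := by
  induction h with
  | now h => exact hP _ h
  | next hq hred _ ih =>
    obtain ⟨i, p, t', h⟩ := hred
    have inside := hK _ hq h.not_isValue
    refine .next (hQ _ hq) ⟨i, p, K t', (inside ..).2 ⟨t', h, rfl⟩⟩ fun i p w hw => ?_
    obtain ⟨r, hr, rfl⟩ := (inside ..).1 hw
    exact ih _ _ _ hr

theorem AllUntil.bind (h : AllUntil S env Q P t) (hQ : ∀ t, Q t → Q' t)
    (hP : ∀ t, P t → AllUntil S env Q' P' t) : AllUntil S env Q' P' t :=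
  h.fill (K := id) hQ (fun _ _ _ => by simp [ReducesInside]) hP

theorem AllUntil.mono (h : AllUntil S env Q P t) (hP : ∀ t, P t → P' t) :
    AllUntil S env Q P' t :=
  h.bind (fun _ => id) fun t ht => .now (hP t ht)

/-- Every branch of the reduction tree of `t` is finite and ends in a value. -/
def Safe (S : ℕ → ℕ → Prop) (env : ℕ → Ty) : Tm → Prop :=
  AllUntil S env (fun _ => True) IsValue

theorem Safe.isValue_of_pathTo {l : List (ℕ × ℚ × Tm)} {o : Tm} (ht : Safe S env t)
    (h : PathTo S env t l o) : IsValue o := by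
  induction h with
  | nil hn =>
    cases ht with
    | now hv => exact hv
    | next _ hred _ => obtain ⟨i, p, t', hstep⟩ := hred; exact absurd hstep (hn i p t')
  | cons hstep _ ih =>
    cases ht with
    | now hv => exact absurd hv hstep.not_isValue
    | next _ _ hsucc => exact ih (hsucc _ _ _ hstep)

theorem allUntil_tup_append {pre : List Tm} (hpre : ∀ u ∈ pre, IsValue u) {ts : List Tm}
    (hts : ∀ u ∈ ts, Safe S env u) :
    AllUntil S env (fun _ => True) (fun w => ∃ vs, (∀ v ∈ vs, IsValue v) ∧ w = .tup vs)
      (.tup (pre ++ ts)) := by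
  induction ts generalizing pre with
  | nil => exact .now ⟨pre, hpre, by simp⟩
  | cons t ts ih =>
    obtain ⟨ht, hts⟩ := List.forall_mem_cons.1 hts
    refine AllUntil.fill (K := fun t => .tup (pre ++ t :: ts)) ht (fun _ => id)
      (fun _ _ hv => reducesInside_tup hpre hv ts) fun v hv => ?_
    have hpre' : ∀ u ∈ pre ++ [v], IsValue u := by
      simpa [or_imp, forall_and] using And.intro hpre hv
    simpa using ih hpre' hts

/-- Every branch of the reduction tree of `t` reaches a term satisfying `P`, and no term before it
is a tuple. Tuples are exempted because projections act on them before their components are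
evaluated. -/
abbrev HeadEvaluates (S : ℕ → ℕ → Prop) (env : ℕ → Ty) (P : Tm → Prop) : Tm → Prop :=
  AllUntil S env NotTuple P

end AllUntil

section Interpretation

variable {S : ℕ → ℕ → Prop} {env : ℕ → Ty}

/-- The reducibility interpretation of a type as a set of weak head normal forms. Components of
tuples and arguments of functions are unevaluated, as in call-by-name; atomic types have no closed
inhabitants. -/
def Ty.interp (S : ℕ → ℕ → Prop) (env : ℕ → Ty) : Ty → Tm → Prop
  | .atom _ => fun _ => False
  | .arrow A B => fun t => ∃ x A' b, t = .lam x A' b ∧ ∀ u, Closed u →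
      HeadEvaluates S env (A.interp S env) u →
        HeadEvaluates S env (B.interp S env) (subst x u b)
  | .sum As => fun t => ∃ A, ∃ _ : A ∈ As, A.interp S env t
  | .tuple A n => fun t => ∃ ts, t = .tup ts ∧ n ≤ ts.length ∧
      ∀ u ∈ ts, HeadEvaluates S env (A.interp S env) u
  | .bool _ _ => fun t => t = .tt ∨ t = .ff

theorem SubTy.interp_le {A B : Ty} (h : SubTy S A B) {t : Tm} (ht : A.interp S env t) :
    B.interp S env t := by
  induction h generalizing t with
  | refl => exact ht
  | trans _ _ ihAB ihBC => exact ihBC (ihAB ht)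
  | atom => simp only [Ty.interp] at ht
  | arrow _ _ ihdom ihcod =>
    simp only [Ty.interp] at ht ⊢
    obtain ⟨x, A', b, rfl, hb⟩ := ht
    exact ⟨x, A', b, rfl, fun u hu hA => (hb u hu (hA.mono fun _ => ihdom)).mono fun _ => ihcod⟩
  | sum g hg _ ih =>
    simp only [Ty.interp] at ht ⊢
    obtain ⟨A, hA, ht⟩ := ht
    obtain ⟨i, rfl⟩ := List.get_of_mem hA
    exact ⟨g i, hg i, ih i ht⟩
  | tuple _ hn ih =>
    simp only [Ty.interp] at ht ⊢
    obtain ⟨ts, rfl, hlen, hts⟩ := ht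
    exact ⟨ts, rfl, hn.trans hlen, fun u hu => (hts u hu).mono fun _ => ih⟩
  | sumSingle => simpa [Ty.interp] using ht
  | singleSum => simpa [Ty.interp] using ht

theorem HeadEvaluates.safe {P : Tm → Prop} {t : Tm} (h : HeadEvaluates S env P t)
    (hP : ∀ t, P t → Safe S env t) : Safe S env t :=
  h.bind (fun _ _ => trivial) hP

theorem Ty.safe_of_interp (A : Ty) {t : Tm} (ht : A.interp S env t) : Safe S env t := by
  match A with
  | .atom _ => simp only [Ty.interp] at ht
  | .arrow A B =>
    simp only [Ty.interp] at ht
    obtain ⟨x, A', b, rfl, _⟩ := ht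
    exact .now .lam
  | .sum As =>
    simp only [Ty.interp] at ht
    obtain ⟨A, _hA, ht⟩ := ht
    exact A.safe_of_interp ht
  | .tuple A n =>
    simp only [Ty.interp] at ht
    obtain ⟨ts, rfl, _, hts⟩ := ht
    have hsafe : ∀ u ∈ ts, Safe S env u := fun u hu => (hts u hu).safe fun _ => A.safe_of_interp
    refine (allUntil_tup_append (pre := []) (by simp) hsafe).mono ?_
    rintro _ ⟨vs, hvs, rfl⟩
    exact .tup hvs
  | .bool _ _ =>
    simp only [Ty.interp] at ht
    rcases ht with rfl | rfl
    exacts [.now .tt, .now .ff]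

theorem headEvaluates_app {P Q : Tm → Prop} {f u : Tm} (hf : HeadEvaluates S env P f)
    (hP : ∀ f, P f → ∃ x A b, f = .lam x A b ∧ HeadEvaluates S env Q (subst x u b)) :
    HeadEvaluates S env Q (.app f u) := by
  refine AllUntil.fill (K := fun f => .app f u) hf (by simp [NotTuple])
    (fun _ _ hv => reducesInside_app hv u) fun f hf => ?_
  obtain ⟨x, A, b, rfl, hb⟩ := hP f hf
  refine .next (by simp [NotTuple]) ⟨_, _, _, .base .beta⟩ fun i p w hw => ?_
  cases hw with
  | base h => cases h; exact hb
  | appL h => exact absurd .lam h.not_isValue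

theorem headEvaluates_app_of_interp {A B : Ty} {f u : Tm}
    (hf : HeadEvaluates S env ((Ty.arrow A B).interp S env) f) (hcu : Closed u)
    (hu : HeadEvaluates S env (A.interp S env) u) :
    HeadEvaluates S env (B.interp S env) (.app f u) := by
  refine headEvaluates_app hf fun f hf => ?_
  simp only [Ty.interp] at hf
  obtain ⟨x, A', b, rfl, hb⟩ := hf
  exact ⟨x, A', b, rfl, hb u hcu hu⟩

theorem headEvaluates_app_of_interp_sum {As : List (Ty × Ty)} {f u : Tm}
    (hf : HeadEvaluates S env ((Ty.sum (As.map fun A => .arrow A.1 A.2)).interp S env) f)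
    (hcu : Closed u) (hu : ∀ A ∈ As, HeadEvaluates S env (A.1.interp S env) u) :
    HeadEvaluates S env ((Ty.sum (As.map Prod.snd)).interp S env) (.app f u) := by
  refine headEvaluates_app hf fun f hf => ?_
  simp only [Ty.interp] at hf
  obtain ⟨_, hmem, hf⟩ := hf
  obtain ⟨A, hA, rfl⟩ := List.mem_map.1 hmem
  simp only [Ty.interp] at hf ⊢
  obtain ⟨x, A', b, rfl, hb⟩ := hf
  exact ⟨x, A', b, rfl, (hb u hcu (hu A hA)).mono fun _ ht =>
    ⟨A.2, List.mem_map_of_mem hA, ht⟩⟩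

theorem headEvaluates_choice {As : List Ty} {qs : List ℚ} {ts : List Tm}
    (hlen : qs.length = ts.length) (hne : ts ≠ [])
    (hts : ∀ t ∈ ts, ∃ A ∈ As, HeadEvaluates S env (A.interp S env) t) :
    HeadEvaluates S env ((Ty.sum As).interp S env) (.choice qs ts) := by
  have hpos : 0 < ts.length := List.length_pos_iff.2 hne
  refine .next (by simp [NotTuple]) ⟨0, _, _, .base (.choice (hlen ▸ hpos) hpos)⟩
    fun i p w hw => ?_
  cases hw with
  | base h =>
    cases h
    obtain ⟨A, hA, ht⟩ := hts _ (List.get_mem _ _)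
    simp only [Ty.interp]
    exact ht.mono fun _ ht => ⟨A, hA, ht⟩

theorem interp_tuple_tup {A : Ty} {n : ℕ} {ts : List Tm} (hn : n ≤ ts.length)
    (hts : ∀ u ∈ ts, HeadEvaluates S env (A.interp S env) u) :
    (Ty.tuple A n).interp S env (.tup ts) := by
  simp only [Ty.interp]
  exact ⟨ts, rfl, hn, hts⟩

theorem headEvaluates_exp {A : Ty} {t : Tm} (ht : HeadEvaluates S env (A.interp S env) t)
    (n : ℕ) : HeadEvaluates S env ((Ty.tuple A n).interp S env) (.exp n t) := by
  refine .next (by simp [NotTuple]) ⟨_, _, _, .base .exp⟩ fun i p w hw => ?_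
  cases hw with
  | base h =>
    cases h
    exact .now (interp_tuple_tup (by simp) fun u hu => List.eq_of_mem_replicate hu ▸ ht)

theorem headEvaluates_proj {A : Ty} {n j : ℕ} {t : Tm}
    (ht : HeadEvaluates S env ((Ty.tuple A n).interp S env) t) (hj : 1 ≤ j) (hjn : j ≤ n) :
    HeadEvaluates S env (A.interp S env) (.proj t j) := by
  refine AllUntil.fill (K := fun t => .proj t j) ht (by simp [NotTuple])
    (fun _ hnt _ => reducesInside_proj hnt j) fun t ht => ?_
  simp only [Ty.interp] at ht
  obtain ⟨ts, rfl, hlen, hts⟩ := ht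
  refine .next (by simp [NotTuple]) ⟨_, _, _, .base (.proj hj (by omega))⟩ fun i p w hw => ?_
  cases hw with
  | base h => cases h; exact hts _ (List.get_mem _ _)
  | proj hnt _ => exact absurd rfl (hnt ts)

theorem headEvaluates_trust_of_isValue {vs : List Tm} (hvs : ∀ v ∈ vs, IsValue v)
    (P : List (ℚ × Ty)) (e : ℚ) :
    HeadEvaluates S env ((Ty.bool P e).interp S env) (.trust (.tup vs) P e) := by
  refine .next (by simp [NotTuple]) ?_ fun i p w hw => ?_
  · by_cases hc : TrustCond S env vs P e
    · exact ⟨_, _, _, .base (.trustT hvs hc)⟩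
    · exact ⟨_, _, _, .base (.trustF hvs hc)⟩
  · cases hw with
    | base h => cases h <;> exact .now (by simp [Ty.interp])
    | trust h => exact absurd (.tup hvs) h.not_isValue

theorem headEvaluates_trust {A : Ty} {n : ℕ} {t : Tm}
    (ht : HeadEvaluates S env ((Ty.tuple A n).interp S env) t) (P : List (ℚ × Ty)) (e : ℚ) :
    HeadEvaluates S env ((Ty.bool P e).interp S env) (.trust t P e) := by
  refine AllUntil.fill (K := fun t => .trust t P e) ht (by simp [NotTuple])
    (fun _ _ hv => reducesInside_trust hv P e) fun t ht => ?_
  simp only [Ty.interp] at ht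
  obtain ⟨ts, rfl, _, hts⟩ := ht
  have hsafe : ∀ u ∈ ts, Safe S env u := fun u hu => (hts u hu).safe fun _ => A.safe_of_interp
  refine AllUntil.fill (K := fun t => .trust t P e)
    (allUntil_tup_append (pre := []) (by simp) hsafe) (by simp [NotTuple])
    (fun _ _ hv => reducesInside_trust hv P e) ?_
  rintro _ ⟨vs, hvs, rfl⟩
  exact headEvaluates_trust_of_isValue hvs P e

end Interpretation

section TypeSafety

variable {S : ℕ → ℕ → Prop} {env Γ : ℕ → Ty} {t : Tm} {T : Ty} {γ : List (ℕ × Tm)}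

/-- The closing substitution `γ` binds variables to closed terms that are reducible at the types
assigned by `Γ`. -/
def ReducibleSubst (S : ℕ → ℕ → Prop) (env Γ : ℕ → Ty) (γ : List (ℕ × Tm)) : Prop :=
  ∀ b ∈ γ, Closed b.2 ∧ HeadEvaluates S env ((Γ b.1).interp S env) b.2

theorem ReducibleSubst.closed (hγ : ReducibleSubst S env Γ γ) : ∀ b ∈ γ, Closed b.2 :=
  fun b hb => (hγ b hb).1

theorem ReducibleSubst.update {x : ℕ} {A : Ty} {u : Tm} (hγ : ReducibleSubst S env Γ γ)
    (hu : Closed u) (huA : HeadEvaluates S env (A.interp S env) u) :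
    ReducibleSubst S env (Function.update Γ x A) (γ.filter (·.1 ≠ x) ++ [(x, u)]) := by
  intro b hb
  rcases List.mem_append.1 hb with hb | hb
  · obtain ⟨hbγ, hbx⟩ := List.mem_filter.1 hb
    rw [Function.update_of_ne (of_decide_eq_true hbx)]
    exact hγ b hbγ
  · obtain rfl := List.mem_singleton.1 hb
    simpa using ⟨hu, huA⟩

theorem interp_arrow_substAll_lam {x : ℕ} {A B : Ty} (hγ : ReducibleSubst S env Γ γ)
    (hcl : ClosedU (γ.map Prod.fst) (.lam x A t))
    (ih : ∀ δ, ClosedU (δ.map Prod.fst) t → ReducibleSubst S env (Function.update Γ x A) δ →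
      HeadEvaluates S env (B.interp S env) (substAll δ t)) :
    (Ty.arrow A B).interp S env (substAll γ (.lam x A t)) := by
  cases hcl with
  | lam hcl =>
    simp only [Ty.interp, substAll_lam]
    refine ⟨x, A, _, rfl, fun u hu huA => ?_⟩
    rw [← substAll_append_singleton]
    refine ih _ (hcl.mono fun y hy => ?_) (hγ.update hu huA)
    by_cases hyx : y = x
    · simp [hyx]
    · simpa [hyx] using List.mem_of_ne_of_mem hyx hy

theorem HasTy.headEvaluates_substAll (h : HasTy S Γ t T) (hcl : ClosedU (γ.map Prod.fst) t)
    (hγ : ReducibleSubst S env Γ γ) :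
    HeadEvaluates S env (T.interp S env) (substAll γ t) := by
  induction h generalizing γ with
  | tt => rw [substAll_tt]; exact .now (by simp [Ty.interp])
  | ff => rw [substAll_ff]; exact .now (by simp [Ty.interp])
  | var => cases hcl with | var hx => exact (hγ _ (mk_substAll_var_mem hγ.closed hx)).2
  | lam _ ih => exact .now (interp_arrow_substAll_lam hγ hcl fun δ => ih)
  | app _ _ hsub ihf ihu =>
    cases hcl with | app hf hu =>
    rw [substAll_app]
    exact headEvaluates_app_of_interp (ihf hf hγ) (closed_substAll hu hγ.closed)
      ((ihu hu hγ).mono fun _ => hsub.interp_le)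
  | appChoice _ _ hsub _ ihf ihu =>
    cases hcl with | app hf hu =>
    rw [substAll_app]
    exact headEvaluates_app_of_interp_sum (ihf hf hγ) (closed_substAll hu hγ.closed)
      fun A hA => (ihu hu hγ).mono fun _ => (hsub A hA).interp_le
  | choice hlen hne _ hlen' _ _ ih =>
    cases hcl with | choice hcl =>
    rw [substAll_choice]
    refine headEvaluates_choice (by simpa using hlen) (by simpa using hne)
      (List.forall_mem_map.2 fun t ht => ?_)
    obtain ⟨⟨i, hi⟩, rfl⟩ := List.get_of_mem ht
    exact ⟨_, List.get_mem _ _, ih i hi (hlen' ▸ hi) (hcl _ ht) hγ⟩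
  | exp _ _ ih =>
    cases hcl with | exp hcl =>
    rw [substAll_exp]
    exact headEvaluates_exp (ih hcl hγ) _
  | tup _ hlen _ hsub ih =>
    cases hcl with | tup hcl =>
    rw [substAll_tup]
    refine .now (interp_tuple_tup (by simp) (List.forall_mem_map.2 fun t ht => ?_))
    obtain ⟨⟨i, hi⟩, rfl⟩ := List.get_of_mem ht
    exact (ih i hi (hlen ▸ hi) (hcl _ ht) hγ).mono
      fun _ => (hsub _ (List.get_mem _ _)).interp_le
  | proj _ hj hjn ih =>
    cases hcl with | proj hcl =>
    rw [substAll_proj]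
    exact headEvaluates_proj (ih hcl hγ) hj hjn
  | trust _ ih =>
    cases hcl with | trust hcl =>
    rw [substAll_trust]
    exact headEvaluates_trust (ih hcl hγ) _ _

theorem HasTy.safe (ht : HasTy S env t T) (hct : Closed t) : Safe S env t :=
  (ht.headEvaluates_substAll (γ := []) hct (by simp [ReducibleSubst])).safe
    fun _ => T.safe_of_interp

end TypeSafety

section Paths

variable {S : ℕ → ℕ → Prop} {env : ℕ → Ty} {K : Tm → Tm} {t u v o : Tm}
  {l l₁ l₂ l₁' l₂' : List (ℕ × ℚ × Tm)}

/-- The path in the reduction tree of `K t` that performs inside `K` the steps of the path `l` of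
`t`. -/
def mapPath (K : Tm → Tm) (l : List (ℕ × ℚ × Tm)) : List (ℕ × ℚ × Tm) :=
  l.map fun e => (e.1, e.2.1, K e.2.2)

theorem mapPath_injective (hK : K.Injective) : (mapPath K).Injective :=
  List.map_injective_iff.2 <| .prodMap Function.injective_id (.prodMap Function.injective_id hK)

theorem pathWeight_append (l l' : List (ℕ × ℚ × Tm)) :
    pathWeight (l ++ l') = pathWeight l * pathWeight l' := by
  simp [pathWeight]

theorem pathWeight_mapPath (K : Tm → Tm) (l : List (ℕ × ℚ × Tm)) :
    pathWeight (mapPath K l) = pathWeight l := by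
  simp [pathWeight, mapPath, Function.comp_def]

theorem PathTo.normal (h : PathTo S env t l o) (i : ℕ) (p : ℚ) (o' : Tm) :
    ¬ CBN S env o i p o' := by
  induction h with
  | nil hn => exact hn i p o'
  | cons _ _ ih => exact ih

theorem PathTo.of_normal (ht : ∀ i p t', ¬ CBN S env t i p t') (h : PathTo S env t l o) :
    l = [] ∧ o = t := by
  cases h with
  | nil => exact ⟨rfl, rfl⟩
  | cons hstep => exact absurd hstep (ht _ _ _)

theorem PathTo.mapPath_append (hK : ∀ t, ¬ IsValue t → ReducesInside S env K t)
    (h₁ : PathTo S env t l₁ u) (h₂ : PathTo S env (K u) l₂ o) :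
    PathTo S env (K t) (mapPath K l₁ ++ l₂) o := by
  induction h₁ with
  | nil => exact h₂
  | cons hstep _ ih => exact .cons ((hK _ hstep.not_isValue ..).2 ⟨_, hstep, rfl⟩) (ih h₂)

theorem PathTo.exists_eq_mapPath_append (hK : ∀ t, ¬ IsValue t → ReducesInside S env K t)
    (h : PathTo S env (K t) l o) :
    ∃ l₁ u l₂, PathTo S env t l₁ u ∧ PathTo S env (K u) l₂ o ∧ l = mapPath K l₁ ++ l₂ := by
  generalize hr : K t = r at h
  induction h generalizing t with
  | nil hn =>
    subst hr
    have ht : ∀ i p t', ¬ CBN S env t i p t' := fun i p t' hstep =>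
      hn _ _ _ ((hK t hstep.not_isValue ..).2 ⟨t', hstep, rfl⟩)
    exact ⟨[], t, [], .nil ht, .nil hn, rfl⟩
  | @cons _ i p _ l _ hstep h ih =>
    subst hr
    by_cases ht : ∀ i p t', ¬ CBN S env t i p t'
    · exact ⟨[], t, _, .nil ht, .cons hstep h, rfl⟩
    · push Not at ht
      obtain ⟨_, _, _, hred⟩ := ht
      obtain ⟨t', ht', rfl⟩ := (hK t hred.not_isValue ..).1 hstep
      obtain ⟨l₁, u, l₂, h₁, h₂, rfl⟩ := ih rfl
      exact ⟨(i, p, t') :: l₁, u, l₂, .cons ht' h₁, h₂, rfl⟩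

theorem PathTo.mapPath_append_inj (hK : K.Injective) (h₁ : PathTo S env t l₁ u)
    (h₁' : PathTo S env t l₁' v) (h : mapPath K l₁ ++ l₂ = mapPath K l₁' ++ l₂') :
    l₁ = l₁' ∧ l₂ = l₂' := by
  induction h₁ generalizing l₁' with
  | nil hn => simpa [(h₁'.of_normal hn).1, mapPath] using h
  | cons hstep _ ih =>
    cases h₁' with
    | nil hn => exact absurd hstep (hn _ _ _)
    | cons _ h₁' =>
      simp only [mapPath, List.map_cons, List.cons_append, List.cons.injEq, Prod.mk.injEq,
        hK.eq_iff] at h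
      obtain ⟨⟨rfl, rfl, rfl⟩, h⟩ := h
      simpa using ih h₁' h

theorem Safe.finite_setOf_pathTo (h : Safe S env t) (o : Tm) :
    {l | PathTo S env t l o}.Finite := by
  induction h with
  | now hv =>
    refine (Set.finite_singleton []).subset fun l hl => ?_
    exact (hl.of_normal fun _ _ _ h => h.not_isValue hv).1
  | @next t _ _ _ ih =>
    refine ((Set.finite_singleton []).union ((finite_setOf_cbn t).biUnion fun e he =>
      (ih _ _ _ he).image (e :: ·))).subset fun l hl => ?_
    cases hl with
    | nil => exact .inl rfl
    | cons hstep hl => exact .inr (Set.mem_biUnion hstep ⟨_, hl, rfl⟩)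

theorem Safe.summable_pathWeight (h : Safe S env t) (o : Tm) :
    Summable fun l : {l // PathTo S env t l o} => pathWeight l.1 :=
  have : Finite {l // PathTo S env t l o} := h.finite_setOf_pathTo o
  .of_finite

end Paths

section Pairs

variable {S : ℕ → ℕ → Prop} {env : ℕ → Ty} {s t u v : Tm}
  {l l₁ l₂ l₁' l₂' : List (ℕ × ℚ × Tm)}

theorem reducesInside_pair_left (ht : ¬ IsValue t) (s : Tm) :
    ReducesInside S env (fun t => .tup [t, s]) t :=
  reducesInside_tup (pre := []) (by simp) ht [s]

theorem reducesInside_pair_right (hu : IsValue u) (hs : ¬ IsValue s) :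
    ReducesInside S env (fun s => .tup [u, s]) s :=
  reducesInside_tup (pre := [u]) (by simpa using hu) hs []

theorem pair_normal (hu : IsValue u) (hv : ∀ i p v', ¬ CBN S env v i p v') (i : ℕ) (p : ℚ)
    (w : Tm) : ¬ CBN S env (.tup [u, v]) i p w := fun hstep =>
  have hv' : ¬ IsValue v := fun hv' => hstep.not_isValue (.tup (by simp [hu, hv']))
  (reducesInside_pair_right hu hv').normal hv i p w hstep

/-- The path in the reduction tree of `⟨t, s⟩` that follows a path `l₁` from `t` to `u` in the first
component and then a path `l₂` of `s` in the second. -/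
def pairPath (s u : Tm) (l₁ l₂ : List (ℕ × ℚ × Tm)) : List (ℕ × ℚ × Tm) :=
  mapPath (fun t => .tup [t, s]) l₁ ++ mapPath (fun s => .tup [u, s]) l₂

theorem pathWeight_pairPath (s u : Tm) (l₁ l₂ : List (ℕ × ℚ × Tm)) :
    pathWeight (pairPath s u l₁ l₂) = pathWeight l₁ * pathWeight l₂ := by
  simp only [pairPath, pathWeight_append, pathWeight_mapPath]

theorem PathTo.pair (h₁ : PathTo S env t l₁ u) (hu : IsValue u) (h₂ : PathTo S env s l₂ v) :
    PathTo S env (.tup [t, s]) (pairPath s u l₁ l₂) (.tup [u, v]) := by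
  refine h₁.mapPath_append (K := fun t => .tup [t, s])
    (fun _ ht => reducesInside_pair_left ht s) ?_
  have hnormal := PathTo.nil (pair_normal hu h₂.normal)
  simpa using h₂.mapPath_append (fun _ => reducesInside_pair_right hu) hnormal

theorem PathTo.exists_eq_pairPath (hu : ∀ l, PathTo S env t l u → IsValue u)
    (h : PathTo S env (.tup [t, s]) l (.tup [u, v])) :
    ∃ l₁ l₂, PathTo S env t l₁ u ∧ PathTo S env s l₂ v ∧ pairPath s u l₁ l₂ = l := by
  obtain ⟨l₁, u', l', h₁, h', rfl⟩ := exists_eq_mapPath_append (K := fun t => .tup [t, s])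
    (fun _ ht => reducesInside_pair_left ht s) h
  by_cases hu' : IsValue u'
  · obtain ⟨l₂, v', l₃, h₂, h₃, rfl⟩ := exists_eq_mapPath_append (K := fun s => .tup [u', s])
      (fun _ => reducesInside_pair_right hu') h'
    obtain ⟨rfl, heq⟩ := h₃.of_normal (pair_normal hu' h₂.normal)
    obtain ⟨rfl, rfl⟩ : u = u' ∧ v = v' := by simpa using heq
    exact ⟨l₁, l₂, h₁, h₂, by rw [pairPath, List.append_nil]⟩
  · have heq := (h'.of_normal ((reducesInside_pair_left hu' s).normal h₁.normal)).2
    obtain ⟨rfl, _⟩ : u = u' ∧ v = s := by simpa using heq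
    exact absurd (hu l₁ h₁) hu'

theorem pairPath_inj (h₁ : PathTo S env t l₁ u) (h₁' : PathTo S env t l₁' u)
    (h : pairPath s u l₁ l₂ = pairPath s u l₁' l₂') : l₁ = l₁' ∧ l₂ = l₂' := by
  obtain ⟨hl₁, hl₂⟩ := PathTo.mapPath_append_inj (fun _ _ h => by simpa using h) h₁ h₁' h
  exact ⟨hl₁, mapPath_injective (fun _ _ h => by simpa using h) hl₂⟩

/-- The branches of the reduction tree of `⟨t, s⟩` ending in `⟨u, v⟩` correspond to the pairs of a
branch of `t` ending in `u` and a branch of `s` ending in `v`. -/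
noncomputable def pairPathEquiv (s v : Tm) (hu : ∀ l, PathTo S env t l u → IsValue u) :
    {l // PathTo S env t l u} × {l // PathTo S env s l v} ≃
      {l // PathTo S env (.tup [t, s]) l (.tup [u, v])} :=
  .ofBijective (fun z => ⟨pairPath s u z.1 z.2, z.1.2.pair (hu z.1 z.1.2) z.2.2⟩) <| by
    refine ⟨fun z z' h => ?_, fun ⟨l, hl⟩ => ?_⟩
    · obtain ⟨h₁, h₂⟩ := pairPath_inj z.1.2 z'.1.2 (congrArg Subtype.val h)
      exact Prod.ext (Subtype.ext h₁) (Subtype.ext h₂)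
    · obtain ⟨l₁, l₂, h₁, h₂, h⟩ := hl.exists_eq_pairPath hu
      exact ⟨(⟨l₁, h₁⟩, ⟨l₂, h₂⟩), Subtype.ext h⟩

theorem pair_output_probability_general (hu : ∀ l, PathTo S env t l u → IsValue u)
    (ht : Summable fun l : {l // PathTo S env t l u} => pathWeight l.1)
    (hs : Summable fun l : {l // PathTo S env s l v} => pathWeight l.1) :
    PrOut S env (.tup [t, s]) (.tup [u, v]) = PrOut S env t u * PrOut S env s v :=
  calc
    _ = ∑' z : {l // PathTo S env t l u} × {l // PathTo S env s l v},
          pathWeight (pairPathEquiv s v hu z).1 := ((pairPathEquiv s v hu).tsum_eq _).symm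
    _ = ∑' z : {l // PathTo S env t l u} × {l // PathTo S env s l v},
          pathWeight z.1.1 * pathWeight z.2.1 := tsum_congr fun _ => pathWeight_pairPath ..
    _ = _ := (tsum_mul_tsum_of_summable_norm ht.norm hs.norm).symm

end Pairs

/-- **Product rule for paired probabilistic programs**: for closed typed terms
    `t` and `s`, if `Pr(u, 𝒯_t) = p` and `Pr(v, 𝒯_s) = q`, then
    `Pr(⟨u, v⟩, 𝒯_{⟨t, s⟩}) = p·q`. -/
theorem pair_output_probability (S : ℕ → ℕ → Prop) (env : ℕ → Ty)
    (t s u v : Tm) (T1 T2 : Ty)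
    (ht : HasTy S env t T1) (hs : HasTy S env s T2)
    (hct : Closed t) (hcs : Closed s) (p q : ℝ)
    (hp : PrOut S env t u = p) (hq : PrOut S env s v = q) :
    PrOut S env (.tup [t, s]) (.tup [u, v]) = p * q :=
  have hsafe := ht.safe hct
  hp ▸ hq ▸ pair_output_probability_general (fun _ => hsafe.isValue_of_pathTo)
    (hsafe.summable_pathWeight u) ((hs.safe hcs).summable_pathWeight v)
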